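/- Let p be a prime, let m > n > 0 be integers, and let a be a nonzero element of the prime field F_p. If the polynomial f(x) = x^m + a x^n permutes F_p, then p − 1 ≤ (m − 1) · max(n, gcd(m−n, p−1)). -/

import Mathlib

/-!
The proof applies the easy half of Hermite's criterion to one well-chosen power of the binomial.
A common factor of `m` and `n` can be removed, since `x ^ m + a * x ^ n` is a function of
`x ^ gcd(m, n)`; so let `m`, `n` be coprime.  Put `d = gcd(m - n, p - 1)`, `m - n = d * D`,
`p - 1 = d * e`, so that `D` and `e` are coprime, and suppose `p - 1 > (m - 1) * max(n, d)`.

For `s = d * t`, the monomials of `(x ^ m + a * x ^ n) ^ s` have exponents `d * (n * t + D * j)`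
with `0 ≤ j ≤ s`, and summing over `F_p` keeps those with `e ∣ n * t + D * j`.  As `n` is a unit
modulo `D`, every interval of `D` consecutive integers contains a `t` with `n * t + D * i = e`
for some integer `i`; taking `t` in `[⌈e/m⌉, ⌈e/m⌉ + D - 1]`, the assumed bound yields
`0 ≤ i ≤ s < i + e` and `s < p - 1` (`exists_exponent`).  The values of `j` that are kept are
congruent to `i` modulo `e`, so `j = i` is the only one.  Hence the sum of the `s`-th powers of
the values is `- C(s, i) * a ^ (s - i) ≠ 0`, whereas for a permutation it equals `∑ x, x ^ s = 0`.
-/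

/-- Power sums over `F_p` with positive exponent; the positivity lets the term at `0` vanish. -/
lemma sum_pow_zmod (p : ℕ) [Fact p.Prime] (k : ℕ) (hk : 0 < k) :
    ∑ x : ZMod p, x ^ k = if p - 1 ∣ k then -1 else 0 := by
  have h := FiniteField.sum_pow_units (ZMod p) k
  rw [ZMod.card] at h
  rw [← h]
  have h2 : ∑ x : ZMod p, x ^ k = ∑ x ∈ Finset.univ \ {(0 : ZMod p)}, x ^ k := by
    rw [← Finset.sum_sdiff (Finset.subset_univ {(0 : ZMod p)})]
    simp [hk.ne']
  rw [h2]
  symm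
  refine Finset.sum_bij (fun u _ => (u : ZMod p)) ?_ ?_ ?_ ?_
  · intro u _
    simp
  · intro u _ v _ huv
    exact Units.ext huv
  · intro b hb
    have hb0 : b ≠ 0 := by simpa using hb
    exact ⟨Units.mk0 b hb0, Finset.mem_univ _, rfl⟩
  · intro u _
    rfl

/-- The arithmetic core: a power `d * t` and an index `i` for which the exponent
`d * (n * t + D * i)` equals `p - 1 = d * e`, with `i` the only index in `[0, d * t]` of its
class modulo `e`.  Here `m = n + d * D`. -/
lemma exists_exponent (n d D e : ℕ) (hn : 0 < n) (hd : 0 < d) (hD : 0 < D)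
    (hcop : Nat.Coprime n D) (he : n + d * D ≤ e)
    (hne : (n + d * D - 1) * n < d * e) :
    ∃ t i : ℕ, 0 < t ∧ t < e ∧ n * t + D * i = e ∧ i ≤ d * t ∧ d * t < e + i := by
  obtain ⟨m, hm⟩ : ∃ m, m = n + d * D := ⟨_, rfl⟩
  rw [← hm] at he hne
  have hdD : D ≤ d * D := Nat.le_mul_of_pos_left D hd
  have hm0 : 0 < m := by omega
  -- `q + 1 = ⌈e / m⌉`, with `e = m * q + r` and `1 ≤ r ≤ m`.
  obtain ⟨q, r, hqr, hr1, hrm⟩ : ∃ q r : ℕ, e = m * q + r ∧ 1 ≤ r ∧ r ≤ m := by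
    refine ⟨(e - 1) / m, (e - 1) % m + 1, ?_, by omega, Nat.mod_lt _ hm0⟩
    have := Nat.div_add_mod (e - 1) m
    omega
  -- a solution of `n * t ≡ e` modulo `D` among the `D` consecutive integers from `q + 1` on
  obtain ⟨t, ht1, ht2, htD⟩ : ∃ t : ℕ, q + 1 ≤ t ∧ t ≤ q + D ∧ (D : ℤ) ∣ (e : ℤ) - n * t := by
    have hbez := Nat.gcd_eq_gcd_ab n D
    rw [hcop.gcd_eq_one] at hbez
    push_cast at hbez
    set w : ℤ := Nat.gcdA n D * e - (q + 1) with hw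
    have hDz : (0 : ℤ) < D := by exact_mod_cast hD
    have h0 := Int.emod_nonneg w hDz.ne'
    have h1 := Int.emod_lt_of_pos w hDz
    have h2 := Int.emod_add_mul_ediv w D
    refine ⟨q + 1 + (w % D).toNat, by omega, by omega, ?_⟩
    refine ⟨Nat.gcdB n D * e + n * (w / D), ?_⟩
    push_cast
    rw [Int.toNat_of_nonneg h0]
    linear_combination (e : ℤ) * hbez - (n : ℤ) * h2 - (n : ℤ) * hw
  -- the only use of `hne`: it forces `n * (q + D) ≤ e`, hence `i ≥ 0`
  have hnt : n * t ≤ e := by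
    have h1 : n * t ≤ n * (q + D) := Nat.mul_le_mul_left _ ht2
    suffices h : n * (q + D) ≤ e from h1.trans h
    by_contra! hlt
    have hne' : m * n + 1 ≤ d * e + n := by
      obtain ⟨m', rfl⟩ : ∃ m', m = m' + 1 := ⟨m - 1, by omega⟩
      simp only [Nat.add_sub_cancel] at hne
      nlinarith
    have hlt' : d * D * q + r + 1 ≤ n * D := by
      subst hm
      rw [hqr] at hlt
      nlinarith
    have hc : d * q < n := by
      by_contra! hc
      have := Nat.mul_le_mul_right D hc
      nlinarith
    obtain ⟨c, hc1, hnc⟩ : ∃ c, 1 ≤ c ∧ n = d * q + c := ⟨n - d * q, by omega, by omega⟩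
    have hcD : r + 1 ≤ c * D := by
      have : n * D = d * D * q + c * D := by rw [hnc]; ring
      omega
    have h3 : d * (r + 1) ≤ d * (c * D) := Nat.mul_le_mul_left _ hcD
    have h4 : m * c + 1 ≤ d * r + n := by
      have e1 : m * n = m * (d * q) + m * c := by conv_lhs => rw [hnc, mul_add]
      have e2 : d * e = m * (d * q) + d * r := by rw [hqr]; ring
      omega
    have h5 : m * c = n * c + d * (c * D) := by rw [hm]; ring
    have h6 : n ≤ n * c := Nat.le_mul_of_pos_right n hc1
    have h7 : d * (r + 1) = d * r + d := by ring
    omega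
  obtain ⟨i, hi⟩ : D ∣ e - n * t := by
    rw [← Int.natCast_dvd_natCast]
    push_cast [Nat.cast_sub hnt]
    exact htD
  have hi' : n * t + D * i = e := by omega
  have hmt : e ≤ m * t := by
    have := Nat.mul_le_mul_left m ht1
    rw [mul_add] at this
    omega
  have hDm : D + 1 ≤ m := by omega
  refine ⟨t, i, by omega, ?_, hi', ?_, ?_⟩
  · rcases Nat.eq_zero_or_pos q with h | h
    · subst h
      omega
    · have h1 : (D + 1) * q ≤ m * q := Nat.mul_le_mul_right q hDm
      have h2 : D * 1 ≤ D * q := Nat.mul_le_mul_left D h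
      have h3 : (D + 1) * q = D * q + q := by ring
      omega
  · have h1 : D * i ≤ D * (d * t) := by
      have : m * t = n * t + D * (d * t) := by rw [hm]; ring
      omega
    exact Nat.le_of_mul_le_mul_left h1 hD
  · have h1 : m * t < e * (1 + D) := by
      have h2 : m * t ≤ m * (q + D) := Nat.mul_le_mul_left m ht2
      have h3 : m * D ≤ e * D := Nat.mul_le_mul_right D he
      have h4 : m * (q + D) = m * q + m * D := by ring
      have h5 : e * (1 + D) = e + e * D := by ring
      omega
    have h2 : D * (d * t) < D * (e + i) := by
      have e1 : m * t = n * t + D * (d * t) := by rw [hm]; ring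
      have e2 : e * (1 + D) = e + D * e := by ring
      have e3 : D * (e + i) = D * e + D * i := by ring
      omega
    exact Nat.lt_of_mul_lt_mul_left h2

/-- The bound for coprime exponents, by evaluating the power sum of the values in two ways. -/
lemma binomial_bound_of_coprime (p : ℕ) (hp : p.Prime) (m n : ℕ)
    (hn : 0 < n) (hnm : n < m) (hmn : Nat.Coprime m n) (a : ZMod p) (ha : a ≠ 0)
    (hperm : Function.Bijective (fun x : ZMod p => x ^ m + a * x ^ n)) :
    p - 1 ≤ (m - 1) * max n (Nat.gcd (m - n) (p - 1)) := by
  have := Fact.mk hp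
  by_contra! hlt
  have hp2 := hp.two_le
  have hdpos : 0 < Nat.gcd (m - n) (p - 1) := Nat.gcd_pos_of_pos_left _ (by omega)
  obtain ⟨D, e, hcop, hD, he⟩ := Nat.exists_coprime (m - n) (p - 1)
  set d := Nat.gcd (m - n) (p - 1) with hd
  have hm : m = n + d * D := by rw [mul_comm]; omega
  have hpe : p - 1 = d * e := by rw [mul_comm]; exact he
  have hDpos : 0 < D := by
    rcases Nat.eq_zero_or_pos D with h | h
    · subst h
      omega
    · exact h
  have hnD : Nat.Coprime n D := by
    have h1 : Nat.Coprime n (d * D) := by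
      rw [hm] at hmn
      simpa [Nat.coprime_comm] using hmn
    exact h1.coprime_dvd_right (Dvd.intro_left d rfl)
  have hem : m ≤ e := by
    have h1 : (m - 1) * d < e * d := by
      calc (m - 1) * d ≤ (m - 1) * max n d := Nat.mul_le_mul_left _ (le_max_right _ _)
        _ < e * d := by rw [← he]; exact hlt
    have := Nat.lt_of_mul_lt_mul_right h1
    omega
  have hne : (m - 1) * n < d * e := by
    calc (m - 1) * n ≤ (m - 1) * max n d := Nat.mul_le_mul_left _ (le_max_left _ _)
      _ < d * e := by rw [← hpe]; exact hlt
  obtain ⟨t, i, ht0, hte, hti, his, hsi⟩ :=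
    exists_exponent n d D e hn hdpos hDpos hnD (hm ▸ hem) (hm ▸ hne)
  have hs0 : 0 < d * t := Nat.mul_pos hdpos ht0
  have hsp : d * t < p - 1 := by
    rw [hpe]
    exact Nat.mul_lt_mul_of_pos_left hte hdpos
  have hie : i < e := by
    have h1 : 0 < n * t := Nat.mul_pos hn ht0
    have h2 : i ≤ D * i := Nat.le_mul_of_pos_left i hDpos
    omega
  have hexp : ∀ j ≤ d * t, m * j + n * (d * t - j) = d * (n * t + D * j) := by
    intro j hj
    obtain ⟨k, hk⟩ := Nat.exists_eq_add_of_le hj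
    rw [hk, Nat.add_sub_cancel_left, hm, mul_add d, mul_left_comm d n t, hk]
    ring
  -- `j = i` is the only index whose exponent is divisible by `p - 1`
  have hdvd : ∀ j ≤ d * t, (p - 1 ∣ m * j + n * (d * t - j) ↔ j = i) := by
    intro j hj
    rw [hexp j hj, hpe, Nat.mul_dvd_mul_iff_left hdpos]
    constructor
    · intro h
      have h1 : (e : ℤ) ∣ (D : ℤ) * ((j : ℤ) - i) := by
        have h2 : (e : ℤ) ∣ ((n * t + D * j : ℕ) : ℤ) := by exact_mod_cast h
        have h3 : (e : ℤ) ∣ ((n * t + D * i : ℕ) : ℤ) := by rw [hti]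
        have h4 := dvd_sub h2 h3
        push_cast at h4
        rwa [add_sub_add_left_eq_sub, ← mul_sub] at h4
      have h2 : (e : ℤ) ∣ (j : ℤ) - i :=
        (Int.isCoprime_iff_gcd_eq_one.mpr (by
          simpa [Int.gcd_natCast_natCast] using hcop.symm)).dvd_of_dvd_mul_left h1
      have h3 := Int.eq_zero_of_abs_lt_dvd h2 (by rw [abs_lt]; constructor <;> omega)
      omega
    · rintro rfl
      rw [hti]
  have hzero : ∑ x : ZMod p, (x ^ m + a * x ^ n) ^ (d * t) = 0 := by
    rw [hperm.sum_comp (fun y : ZMod p => y ^ (d * t)), sum_pow_zmod p _ hs0,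
      if_neg (Nat.not_dvd_of_pos_of_lt hs0 hsp)]
  have hval : ∑ x : ZMod p, (x ^ m + a * x ^ n) ^ (d * t)
      = -(a ^ (d * t - i) * ((d * t).choose i : ZMod p)) := by
    calc ∑ x : ZMod p, (x ^ m + a * x ^ n) ^ (d * t)
        = ∑ x : ZMod p, ∑ j ∈ Finset.range (d * t + 1),
            a ^ (d * t - j) * ((d * t).choose j : ZMod p)
              * x ^ (m * j + n * (d * t - j)) := by
          refine Finset.sum_congr rfl fun x _ => ?_
          rw [add_pow]
          refine Finset.sum_congr rfl fun j _ => ?_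
          rw [mul_pow, ← pow_mul, ← pow_mul, pow_add]
          ring
      _ = ∑ j ∈ Finset.range (d * t + 1),
            a ^ (d * t - j) * ((d * t).choose j : ZMod p) * (if j = i then -1 else 0) := by
          rw [Finset.sum_comm]
          refine Finset.sum_congr rfl fun j hj => ?_
          have hj' : j ≤ d * t := Nat.lt_succ_iff.mp (Finset.mem_range.mp hj)
          have hpos : 0 < m * j + n * (d * t - j) := by
            rw [hexp j hj']
            exact Nat.mul_pos hdpos (Nat.add_pos_left (Nat.mul_pos hn ht0) _)
          rw [← Finset.mul_sum, sum_pow_zmod p _ hpos]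
          simp only [hdvd j hj']
      _ = -(a ^ (d * t - i) * ((d * t).choose i : ZMod p)) := by
          rw [Finset.sum_eq_single i]
          · simp
          · intro j _ hj
            simp [hj]
          · intro h
            exact absurd (Finset.mem_range.mpr (Nat.lt_succ_of_le his)) h
  have hchoose : ((d * t).choose i : ZMod p) ≠ 0 := by
    rw [Ne, ZMod.natCast_eq_zero_iff]
    intro h
    -- `C(s, i)` divides `s!`, and `s < p`
    have h1 : p ∣ (d * t).factorial := by
      rw [← Nat.choose_mul_factorial_mul_factorial his, mul_assoc]
      exact h.mul_right _
    have := (hp.dvd_factorial).mp h1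
    omega
  rw [hzero] at hval
  exact neg_ne_zero.mpr (mul_ne_zero (pow_ne_zero _ ha) hchoose) hval.symm

/-- If `x^m + a x^n` permutes the prime field `F_p` (with `m > n > 0`, `a ≠ 0`), then
`p - 1 ≤ (m - 1) · max(n, gcd(m-n, p-1))`. -/
theorem permutation_binomial_WanTurnwald (p : ℕ) (hp : p.Prime) (m n : ℕ)
    (hn : 0 < n) (hnm : n < m) (a : ZMod p) (ha : a ≠ 0)
    (hperm : Function.Bijective (fun x : ZMod p => x ^ m + a * x ^ n)) :
    p - 1 ≤ (m - 1) * max n (Nat.gcd (m - n) (p - 1)) := by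
  have := Fact.mk hp
  obtain ⟨m', n', hcop, hm, hn'⟩ := Nat.exists_coprime m n
  have hg : 0 < Nat.gcd m n := Nat.gcd_pos_of_pos_right _ hn
  set g := Nat.gcd m n with hgdef
  have hn0 : 0 < n' := by
    rcases Nat.eq_zero_or_pos n' with h | h
    · simp [h] at hn'
      omega
    · exact h
  have hlt : n' < m' := Nat.lt_of_mul_lt_mul_right (a := g) (by rw [← hm, ← hn']; exact hnm)
  have hsurj : Function.Surjective (fun x : ZMod p => x ^ m' + a * x ^ n') := by
    intro y
    obtain ⟨x, hx⟩ := hperm.2 y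
    refine ⟨x ^ g, ?_⟩
    rw [← hx]
    simp only [← pow_mul]
    rw [mul_comm g m', mul_comm g n', ← hm, ← hn']
  have hmain := binomial_bound_of_coprime p hp m' n' hn0 hlt hcop a ha
    (Finite.surjective_iff_bijective.mp hsurj)
  have h1 : m' ≤ m := by rw [hm]; exact Nat.le_mul_of_pos_right _ hg
  have h2 : n' ≤ n := by rw [hn']; exact Nat.le_mul_of_pos_right _ hg
  have h3 : Nat.gcd (m' - n') (p - 1) ≤ Nat.gcd (m - n) (p - 1) := by
    refine Nat.le_of_dvd (Nat.gcd_pos_of_pos_left _ (by omega)) ?_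
    refine Nat.gcd_dvd_gcd_of_dvd_left _ ⟨g, ?_⟩
    rw [Nat.sub_mul, ← hm, ← hn']
  exact hmain.trans (Nat.mul_le_mul (by omega) (max_le_max h2 h3))
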